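/- Every zero z of the entire function d(λ) = S(T,λ) is real and simple; in particular the derivative of d does not vanish at z: (d/dλ)S(T,λ)|_{λ=z} ≠ 0. -/

import Mathlib

/-!
Everything rests on the Lagrange identity. For two solutions `y` (parameter `lam`) and `v`
(parameter `mu`) the Wronskian `W = y v' - y' v` has derivative `(lam - mu) y v`, and it is
continuous across the points `b j` because the jump matrices have determinant one
(`lagrange_piece` on a single piece; the pieces are added up in the theorem). Taking
`y = S(·, lam)`, `v = conj S(·, z)` and `S(T, z) = 0` gives

  `S(T, lam) * conj S'(T, z) = (lam - conj z) * ∫₀ᵀ S(t, lam) * conj S(t, z) dt`.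

At `lam = z` the left side vanishes while the integral is positive, so `z = conj z`. Dividing by
`lam - z` and letting `lam → z`, the right side tends to `∫₀ᵀ |S(t, z)|² dt > 0`, whereas the left
side tends to `d'(z) * conj S'(T, z)`; hence `d'(z) ≠ 0`. The passage to the limit uses that
solutions depend on `lam` in a Lipschitz way (`sol_diff_bound`), a consequence of a Grönwall
inequality with an integrable kernel (`gronwall`).

The definition of a solution only asks for the two integral equations, where an integral of a
non-integrable function is `0` by convention. `pieceSol_of_eqns` shows that this convention never
intervenes: the integrands are integrable, so `y` and `y'` really are absolutely continuous.
The product rule for absolutely continuous complex functions is `integral_prod_rule`.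
-/

open MeasureTheory Set

/-- `PiecewiseSLSol q N b γ η lam y y'` : the family of pieces `y j` (with
derivatives `y' j`), `j = 1,…,N`, solves `-y'' + q y = lam y` on each subinterval
`[b (j-1), b j]` (with `y`, `y'` absolutely continuous there, in equivalent
integral form) and satisfies the discontinuity (jump) conditions
`y(bⱼ+0) = γⱼ y(bⱼ−0)`, `y'(bⱼ+0) = γⱼ⁻¹ y'(bⱼ−0) + ηⱼ y(bⱼ−0)` at the interior
points `b 1 < … < b (N-1)`. -/
def PiecewiseSLSol (q : ℝ → ℝ) (N : ℕ) (b : ℕ → ℝ) (γ η : ℕ → ℝ) (lam : ℂ)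
    (y y' : ℕ → ℝ → ℂ) : Prop :=
  (∀ j, 1 ≤ j → j ≤ N → ∀ x ∈ Icc (b (j - 1)) (b j),
      y j x = y j (b (j - 1)) + ∫ t in (b (j - 1))..x, y' j t) ∧
  (∀ j, 1 ≤ j → j ≤ N → ∀ x ∈ Icc (b (j - 1)) (b j),
      y' j x = y' j (b (j - 1)) + ∫ t in (b (j - 1))..x, ((q t : ℂ) - lam) * y j t) ∧
  (∀ j, 1 ≤ j → j ≤ N - 1 →
      y (j + 1) (b j) = (γ j : ℂ) * y j (b j) ∧
      y' (j + 1) (b j) = ((γ j : ℂ))⁻¹ * y' j (b j) + (η j : ℂ) * y j (b j))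

open ComplexConjugate

/-! ### A Grönwall inequality with integrable kernel -/

/-- Extension of a bound for `u` from `[a, c']` to `[a, x]` when `k` has mass at most `1/2` on
`[c', x]`: the contribution of `[c', x]` is at most half the maximum of `u` and is absorbed. -/
lemma gronwall_step {a c x c' A B L : ℝ} {k u : ℝ → ℝ} (hxc : x ∈ Icc a c) (hc' : c' ∈ Icc a x)
    (hk : IntervalIntegrable k volume a c) (hk0 : ∀ t, 0 ≤ k t)
    (hL : ∫ t in a..c, k t = L) (hB : 0 ≤ B)
    (hu : ContinuousOn u (Icc a x)) (hu0 : ∀ t, 0 ≤ u t)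
    (hInt : ∀ t ∈ Icc a x, u t ≤ A + ∫ s in a..t, k s * u s)
    (huB : ∀ t ∈ Icc a c', u t ≤ B) (hhalf : ∫ t in c'..x, k t ≤ 1 / 2) :
    ∀ t ∈ Icc a x, u t ≤ B + 2 * (|A| + B * L) := by
  have hL0 : 0 ≤ L := by
    rw [← hL]; exact intervalIntegral.integral_nonneg (hxc.1.trans hxc.2) (fun t _ => hk0 t)
  have hkI : ∀ s t, s ∈ Icc a x → t ∈ Icc a x → IntervalIntegrable k volume s t := by
    intro s t hs ht
    apply hk.mono_set
    rw [uIcc_of_le (hxc.1.trans hxc.2)]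
    exact ordConnected_Icc.uIcc_subset ⟨hs.1, hs.2.trans hxc.2⟩ ⟨ht.1, ht.2.trans hxc.2⟩
  have hkuI : ∀ s t, s ∈ Icc a x → t ∈ Icc a x →
      IntervalIntegrable (fun r => k r * u r) volume s t := by
    intro s t hs ht
    exact (hkI s t hs ht).mul_continuousOn (hu.mono (ordConnected_Icc.uIcc_subset hs ht))
  have hax : a ∈ Icc a x := ⟨le_rfl, hxc.1⟩
  obtain ⟨m, hm, hmax⟩ := isCompact_Icc.exists_isMaxOn ⟨a, hax⟩ hu
  have hM : ∀ t ∈ Icc a x, u t ≤ u m := fun t ht => hmax ht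
  intro t ht
  have hBL : 0 ≤ B * L := mul_nonneg hB hL0
  rcases le_total m c' with hmc | hmc
  · have := hM t ht
    have := huB m ⟨hm.1, hmc⟩
    have := abs_nonneg A
    linarith
  · have h1 := hInt m hm
    rw [← intervalIntegral.integral_add_adjacent_intervals (hkuI a c' hax hc')
      (hkuI c' m hc' hm)] at h1
    have h2 : ∫ s in a..c', k s * u s ≤ B * L := by
      have e1 : ∫ s in a..c', k s * u s ≤ ∫ s in a..c', k s * B :=
        intervalIntegral.integral_mono_on hc'.1 (hkuI a c' hax hc')
          ((hkI a c' hax hc').mul_const B)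
          (fun s hs => mul_le_mul_of_nonneg_left (huB s hs) (hk0 s))
      rw [intervalIntegral.integral_mul_const] at e1
      have e2 : ∫ s in a..c', k s ≤ L := by
        rw [← hL]
        exact intervalIntegral.integral_mono_interval le_rfl hc'.1 (hc'.2.trans hxc.2)
          (Filter.Eventually.of_forall hk0) hk
      nlinarith
    have h3 : ∫ s in c'..m, k s * u s ≤ 1 / 2 * u m := by
      have e1 : ∫ s in c'..m, k s * u s ≤ ∫ s in c'..m, k s * u m :=
        intervalIntegral.integral_mono_on hmc (hkuI c' m hc' hm)
          ((hkI c' m hc' hm).mul_const _)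
          (fun s hs => mul_le_mul_of_nonneg_left (hM s ⟨hc'.1.trans hs.1, hs.2.trans hm.2⟩) (hk0 s))
      rw [intervalIntegral.integral_mul_const] at e1
      have e2 : ∫ s in c'..m, k s ≤ ∫ s in c'..x, k s :=
        intervalIntegral.integral_mono_interval le_rfl hmc hm.2
          (Filter.Eventually.of_forall hk0) (hkI c' x hc' ⟨hxc.1, le_rfl⟩)
      nlinarith [hu0 m]
    have := hM t ht
    have := le_abs_self A
    linarith

/-- Grönwall inequality with an integrable kernel. The constant depends only on `k`, `a`, `c`, not
on the right end `x` of the interval on which `u` is controlled. -/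
lemma gronwall {a c : ℝ} {k : ℝ → ℝ} (hac : a ≤ c)
    (hk : IntervalIntegrable k volume a c) (hk0 : ∀ t, 0 ≤ k t) :
    ∃ C, 0 ≤ C ∧ ∀ x ∈ Icc a c, ∀ A, 0 ≤ A → ∀ u : ℝ → ℝ, ContinuousOn u (Icc a x) →
      (∀ t, 0 ≤ u t) → (∀ t ∈ Icc a x, u t ≤ A + ∫ s in a..t, k s * u s) →
      ∀ t ∈ Icc a x, u t ≤ C * A := by
  set L := ∫ t in a..c, k t with hL
  have hL0 : 0 ≤ L := intervalIntegral.integral_nonneg hac (fun t _ => hk0 t)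
  -- Induction on the mass of `k` over `[a, x]`, in steps of `1/2`.
  have key : ∀ n : ℕ, ∃ C, 0 ≤ C ∧ ∀ x ∈ Icc a c, ∫ t in a..x, k t ≤ (n + 1) / 2 →
      ∀ A, 0 ≤ A → ∀ u : ℝ → ℝ, ContinuousOn u (Icc a x) →
      (∀ t, 0 ≤ u t) → (∀ t ∈ Icc a x, u t ≤ A + ∫ s in a..t, k s * u s) →
      ∀ t ∈ Icc a x, u t ≤ C * A := by
    intro n
    induction n with
    | zero =>
      refine ⟨1 + 2 * (1 + L), by positivity, fun x hx hsm A hA u hu hu0 hInt t ht => ?_⟩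
      have hax : a ∈ Icc a x := ⟨le_rfl, hx.1⟩
      have := gronwall_step (B := A) hx hax hk hk0 hL.symm hA hu hu0 hInt (by
        intro s hs
        have hs : s = a := le_antisymm hs.2 hs.1
        have := hInt a hax
        rw [hs]; simpa using this) (by simpa using hsm) t ht
      rw [abs_of_nonneg hA] at this
      linarith
    | succ n ih =>
      obtain ⟨C, hC, h⟩ := ih
      refine ⟨C + 2 * (1 + C * L), by positivity, fun x hx hsm A hA u hu hu0 hInt t ht => ?_⟩
      have hkx : IntervalIntegrable k volume a x := hk.mono_set (by
        rw [uIcc_of_le hac, uIcc_of_le hx.1]; exact Icc_subset_Icc_right hx.2)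
      by_cases hcase : ∫ t in a..x, k t ≤ (n + 1) / 2
      · have := h x hx hcase A hA u hu hu0 hInt t ht
        have : 0 ≤ 2 * (1 + C * L) * A := by positivity
        linarith
      · push Not at hcase
        have hcont : ContinuousOn (fun s => ∫ t in a..s, k t) (Icc a x) := by
          have := intervalIntegral.continuousOn_primitive_interval' (μ := volume) hkx
            left_mem_uIcc
          rwa [uIcc_of_le hx.1] at this
        obtain ⟨c', hc', hval⟩ := intermediate_value_Icc hx.1 hcont
          (show ((n : ℝ) + 1) / 2 ∈ _ from ⟨by simp; positivity, hcase.le⟩)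
        have hsub : Icc a c' ⊆ Icc a x := Icc_subset_Icc_right hc'.2
        have hB := h c' ⟨hc'.1, hc'.2.trans hx.2⟩ hval.le A hA u (hu.mono hsub) hu0
          (fun t ht => hInt t (hsub ht))
        have hkac : IntervalIntegrable k volume a c' := hkx.mono_set (by
          rw [uIcc_of_le hc'.1, uIcc_of_le hx.1]; exact hsub)
        have hkcx : IntervalIntegrable k volume c' x := hkx.mono_set (by
          rw [uIcc_of_le hc'.2, uIcc_of_le hx.1]; exact Icc_subset_Icc_left hc'.1)
        have hadd := intervalIntegral.integral_add_adjacent_intervals hkac hkcx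
        simp only at hval
        push_cast at hsm
        have := gronwall_step (B := C * A) hx hc' hk hk0 hL.symm (by positivity) hu hu0 hInt hB
          (by linarith) t ht
        rw [abs_of_nonneg hA] at this
        linarith
  obtain ⟨n, hn⟩ := exists_nat_gt (2 * L)
  obtain ⟨C, hC, h⟩ := key n
  refine ⟨C, hC, fun x hx => h x hx ?_⟩
  have : ∫ t in a..x, k t ≤ L :=
    intervalIntegral.integral_mono_interval le_rfl hx.1 hx.2 (Filter.Eventually.of_forall hk0) hk
  linarith

/-! ### Integration by parts -/

/-- Complex version of Mathlib's real-valued statement, by real and imaginary parts. -/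
lemma ac_primitive {a c : ℝ} {f : ℝ → ℂ} (hf : IntervalIntegrable f volume a c) :
    AbsolutelyContinuousOnInterval (fun x => ∫ t in a..x, f t) a c := by
  have hre : IntervalIntegrable (fun t => (f t).re) volume a c := ⟨hf.1.re, hf.2.re⟩
  have him : IntervalIntegrable (fun t => (f t).im) volume a c := ⟨hf.1.im, hf.2.im⟩
  have h1 := hre.absolutelyContinuousOnInterval_intervalIntegral left_mem_uIcc
  have h2 := him.absolutelyContinuousOnInterval_intervalIntegral left_mem_uIcc
  unfold AbsolutelyContinuousOnInterval at h1 h2 ⊢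
  have hsplit : ∀ x ∈ uIcc a c, ∫ t in a..x, f t =
      ((∫ t in a..x, (f t).re : ℝ) : ℂ) + ((∫ t in a..x, (f t).im : ℝ) : ℂ) * Complex.I := by
    intro x hx
    have hfx : IntervalIntegrable f volume a x :=
      hf.mono_set (uIcc_subset_uIcc left_mem_uIcc hx)
    have e1 : (∫ t in a..x, (f t).re) = (∫ t in a..x, f t).re :=
      Complex.reCLM.intervalIntegral_comp_comm hfx
    have e2 : (∫ t in a..x, (f t).im) = (∫ t in a..x, f t).im :=
      Complex.imCLM.intervalIntegral_comp_comm hfx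
    rw [e1, e2, Complex.re_add_im]
  have hdist : ∀ x ∈ uIcc a c, ∀ y ∈ uIcc a c,
      dist (∫ t in a..x, f t) (∫ t in a..y, f t) ≤
        dist (∫ t in a..x, (f t).re) (∫ t in a..y, (f t).re) +
        dist (∫ t in a..x, (f t).im) (∫ t in a..y, (f t).im) := by
    intro x hx y hy
    rw [hsplit x hx, hsplit y hy]
    refine (dist_add_add_le _ _ _ _).trans (add_le_add (le_of_eq ?_) (le_of_eq ?_))
    · exact Complex.isometry_ofReal.dist_eq _ _
    · rw [dist_eq_norm, ← sub_mul, norm_mul, Complex.norm_I, mul_one, ← dist_eq_norm]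
      exact Complex.isometry_ofReal.dist_eq _ _
  refine squeeze_zero' ?_ ?_ (by simpa using h1.add h2)
  · exact Filter.Eventually.of_forall <| fun _ ↦ Finset.sum_nonneg (fun i hi ↦ dist_nonneg)
  rw [Filter.eventually_inf_principal]
  filter_upwards with E hE
  rw [← Finset.sum_add_distrib]
  refine Finset.sum_le_sum fun i hi => ?_
  simp only [AbsolutelyContinuousOnInterval.disjWithin, mem_ofPred_eq] at hE
  exact hdist _ (hE.left i hi).left _ (hE.left i hi).right

lemma continuousOn_of_primitive {a c : ℝ} {h h' : ℝ → ℂ}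
    (hi : IntervalIntegrable h' volume a c)
    (he : ∀ x ∈ Icc a c, h x = h a + ∫ t in a..x, h' t) : ContinuousOn h (Icc a c) := by
  refine (continuousOn_const (c := h a)).add
    ((intervalIntegral.continuousOn_primitive_interval' hi left_mem_uIcc).mono Icc_subset_uIcc)
    |>.congr he

/-- Integration by parts for complex functions that are primitives of integrable functions: the
difference of the two sides is absolutely continuous with a.e. zero derivative. -/
lemma integral_prod_rule {a c : ℝ} (hac : a ≤ c) {f f' g g' : ℝ → ℂ}
    (hf' : IntervalIntegrable f' volume a c) (hg' : IntervalIntegrable g' volume a c)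
    (hf : ∀ x ∈ Icc a c, f x = f a + ∫ t in a..x, f' t)
    (hg : ∀ x ∈ Icc a c, g x = g a + ∫ t in a..x, g' t) :
    IntervalIntegrable (fun t => f' t * g t + f t * g' t) volume a c ∧
    ∫ t in a..c, (f' t * g t + f t * g' t) = f c * g c - f a * g a := by
  have hfc := continuousOn_of_primitive hf' hf
  have hgc := continuousOn_of_primitive hg' hg
  rw [← uIcc_of_le hac] at hfc hgc
  have hI : IntervalIntegrable (fun t => f' t * g t + f t * g' t) volume a c :=
    (hf'.mul_continuousOn hgc).add (hg'.continuousOn_mul hfc)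
  refine ⟨hI, ?_⟩
  have hacF : ∀ {h' : ℝ → ℂ} (v : ℂ), IntervalIntegrable h' volume a c →
      AbsolutelyContinuousOnInterval (fun x => v + ∫ t in a..x, h' t) a c := by
    intro h' v hi
    exact ((LipschitzWith.const v).lipschitzOnWith.absolutelyContinuousOnInterval).fun_add (ac_primitive hi)
  -- The formulas for `f` and `g` are extended to the whole line, so that two-sided derivatives
  -- make sense at a.e. point.
  have hW := ((hacF (f a) hf').fun_smul (hacF (g a) hg')).fun_sub (ac_primitive hI)
  obtain ⟨C, hC⟩ := hW.const_of_ae_hasDerivAt_zero (by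
    filter_upwards [hf'.ae_hasDerivAt_integral, hg'.ae_hasDerivAt_integral,
      hI.ae_hasDerivAt_integral] with x h1 h2 h3 hx
    have d1 := (h1 hx a left_mem_uIcc).const_add (f a)
    have d2 := (h2 hx a left_mem_uIcc).const_add (g a)
    have d3 := h3 hx a left_mem_uIcc
    have hx' : x ∈ Icc a c := by rwa [uIcc_of_le hac] at hx
    have := (d1.mul d2).sub d3
    rw [← hf x hx', ← hg x hx', sub_self] at this
    exact this)
  have ha := hC a left_mem_uIcc
  have hc := hC c right_mem_uIcc
  rw [← hf c ⟨hac, le_rfl⟩, ← hg c ⟨hac, le_rfl⟩] at hc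
  simp only [intervalIntegral.integral_same, add_zero, sub_zero, smul_eq_mul] at ha hc
  rw [ha, ← hc]
  ring

/-! ### Solutions on one piece -/

/-- On `[a, c]` the pair `(y, y')` solves `-y'' + q y = lam y` in integral form, the integrands
being genuinely integrable. -/
structure PieceSol (q : ℝ → ℝ) (lam : ℂ) (a c : ℝ) (y y' : ℝ → ℂ) : Prop where
  int_fst : IntervalIntegrable y' volume a c
  int_snd : IntervalIntegrable (fun t => ((q t : ℂ) - lam) * y t) volume a c
  fst : ∀ x ∈ Icc a c, y x = y a + ∫ t in a..x, y' t
  snd : ∀ x ∈ Icc a c, y' x = y' a + ∫ t in a..x, ((q t : ℂ) - lam) * y t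

lemma sol_gronwall_ineq {q : ℝ → ℝ} {lam : ℂ} {a x : ℝ}
    (hq : IntervalIntegrable q volume a x) {y y' : ℝ → ℂ}
    (hy : PieceSol q lam a x y y') {t : ℝ} (ht : t ∈ Icc a x) :
    ‖y t‖ + ‖y' t‖ ≤ (‖y a‖ + ‖y' a‖) +
      ∫ s in a..t, (1 + |q s| + ‖lam‖) * (‖y s‖ + ‖y' s‖) := by
  have hyc := continuousOn_of_primitive hy.int_fst hy.fst
  have hyc' := continuousOn_of_primitive hy.int_snd hy.snd
  have hsub : uIcc a t ⊆ Icc a x := by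
    rw [uIcc_of_le ht.1]; exact Icc_subset_Icc_right ht.2
  have hsub' : uIcc a t ⊆ uIcc a x := hsub.trans Icc_subset_uIcc
  have hk : IntervalIntegrable (fun s => 1 + |q s| + ‖lam‖) volume a t :=
    ((intervalIntegrable_const (c := (1 : ℝ))).add (hq.mono_set hsub').abs).add
      intervalIntegrable_const
  have hku : IntervalIntegrable (fun s => (1 + |q s| + ‖lam‖) * (‖y s‖ + ‖y' s‖)) volume a t :=
    hk.mul_continuousOn ((hyc.mono hsub).norm.add (hyc'.mono hsub).norm)
  have i1 := hy.int_fst.mono_set hsub'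
  have i2 := hy.int_snd.mono_set hsub'
  have e1 : ‖y t‖ ≤ ‖y a‖ + ∫ s in a..t, ‖y' s‖ := by
    rw [hy.fst t ht]
    exact (norm_add_le _ _).trans
      (add_le_add_right (intervalIntegral.norm_integral_le_integral_norm ht.1) _)
  have e2 : ‖y' t‖ ≤ ‖y' a‖ + ∫ s in a..t, ‖((q s : ℂ) - lam) * y s‖ := by
    rw [hy.snd t ht]
    exact (norm_add_le _ _).trans
      (add_le_add_right (intervalIntegral.norm_integral_le_integral_norm ht.1) _)
  have e3 : (∫ s in a..t, ‖y' s‖) + ∫ s in a..t, ‖((q s : ℂ) - lam) * y s‖ ≤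
      ∫ s in a..t, (1 + |q s| + ‖lam‖) * (‖y s‖ + ‖y' s‖) := by
    rw [← intervalIntegral.integral_add i1.norm i2.norm]
    refine intervalIntegral.integral_mono_on ht.1 (i1.norm.add i2.norm) hku fun s _ => ?_
    have : ‖(q s : ℂ) - lam‖ ≤ |q s| + ‖lam‖ := by
      simpa using norm_sub_le (q s : ℂ) lam
    rw [norm_mul]
    nlinarith [norm_nonneg (y s), norm_nonneg (y' s), abs_nonneg (q s), norm_nonneg lam,
      mul_le_mul_of_nonneg_right this (norm_nonneg (y s)),
      mul_nonneg (abs_nonneg (q s)) (norm_nonneg (y' s)),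
      mul_nonneg (norm_nonneg lam) (norm_nonneg (y' s))]
  linarith

/-- The two integral equations force integrability of the integrands. Let `x₀` be the supremum of
the points up to which `(q - lam) y` is integrable. Before `x₀` the function `y'` is continuous and
bounded by `gronwall`; after `x₀` it is constant. So `y'` is integrable on `[a, c]`, which makes
`y` continuous and `(q - lam) y` integrable. -/
lemma pieceSol_of_eqns {q : ℝ → ℝ} {lam : ℂ} {a c : ℝ} (hac : a ≤ c)
    (hq : IntervalIntegrable q volume a c) {y y' : ℝ → ℂ}
    (hfst : ∀ x ∈ Icc a c, y x = y a + ∫ t in a..x, y' t)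
    (hsnd : ∀ x ∈ Icc a c, y' x = y' a + ∫ t in a..x, ((q t : ℂ) - lam) * y t) :
    PieceSol q lam a c y y' := by
  set g : ℝ → ℂ := fun t => ((q t : ℂ) - lam) * y t with hg
  have hqc : IntervalIntegrable (fun t => (q t : ℂ) - lam) volume a c :=
    (show IntervalIntegrable (fun t => (q t : ℂ)) volume a c from
      ⟨hq.1.ofReal, hq.2.ofReal⟩).sub intervalIntegrable_const
  have hsubI : ∀ x ∈ Icc a c, uIcc a x ⊆ uIcc a c := fun x hx =>
    uIcc_subset_uIcc left_mem_uIcc (Icc_subset_uIcc hx)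
  -- If `y'` is integrable then `y` is continuous and everything is integrable.
  suffices h : IntervalIntegrable y' volume a c from
    ⟨h, hqc.mul_continuousOn (uIcc_of_le hac ▸ continuousOn_of_primitive h hfst), hfst, hsnd⟩
  by_contra hny'
  have hgn : ¬ IntervalIntegrable g volume a c := by
    intro h
    have := continuousOn_of_primitive h hsnd
    rw [← uIcc_of_le hac] at this
    exact hny' this.intervalIntegrable
  set s : Set ℝ := {x | x ∈ Icc a c ∧ IntervalIntegrable g volume a x} with hs
  have has : a ∈ s := ⟨⟨le_rfl, hac⟩, IntervalIntegrable.refl⟩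
  have hbdd : BddAbove s := ⟨c, fun x hx => hx.1.2⟩
  set x₀ := sSup s with hx₀
  have hax₀ : a ≤ x₀ := le_csSup hbdd has
  have hx₀c : x₀ ≤ c := csSup_le ⟨a, has⟩ fun x hx => hx.1.2
  -- Beyond `x₀` the integral defining `y'` has the junk value `0`.
  have hafter : ∀ x ∈ Ioc x₀ c, y' x = y' a := by
    intro x hx
    have hxI : x ∈ Icc a c := ⟨hax₀.trans hx.1.le, hx.2⟩
    have : ¬ IntervalIntegrable g volume a x := fun h =>
      absurd (le_csSup hbdd (show x ∈ s from ⟨hxI, h⟩)) (not_le.mpr hx.1)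
    rw [hsnd x hxI, intervalIntegral.integral_undef this, add_zero]
  have hbefore : ∀ x ∈ Ico a x₀, PieceSol q lam a x y y' := by
    intro x hx
    obtain ⟨w, hw, hxw⟩ := exists_lt_of_lt_csSup ⟨a, has⟩ hx.2
    have hgx : IntervalIntegrable g volume a x := hw.2.mono_set
      (uIcc_subset_uIcc left_mem_uIcc (Icc_subset_uIcc ⟨hx.1, hxw.le⟩))
    have hsub : Icc a x ⊆ Icc a c := Icc_subset_Icc_right (hx.2.le.trans hx₀c)
    have hc := continuousOn_of_primitive hgx fun t ht => hsnd t (hsub ht)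
    rw [← uIcc_of_le hx.1] at hc
    exact ⟨hc.intervalIntegrable, hgx, fun t ht => hfst t (hsub ht), fun t ht => hsnd t (hsub ht)⟩
  obtain ⟨C, hC, hgr⟩ := gronwall (k := fun s => 1 + |q s| + ‖lam‖) hac
    (((intervalIntegrable_const (c := (1 : ℝ))).add hq.abs).add intervalIntegrable_const)
    (fun t => by positivity)
  have hbound : ∀ x ∈ Ico a x₀, ‖y' x‖ ≤ C * (‖y a‖ + ‖y' a‖) := by
    intro x hx
    have hxI : x ∈ Icc a c := ⟨hx.1, hx.2.le.trans hx₀c⟩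
    have hsol := hbefore x hx
    have hcy := continuousOn_of_primitive hsol.int_fst hsol.fst
    have hcy' := continuousOn_of_primitive hsol.int_snd hsol.snd
    have := hgr x hxI (‖y a‖ + ‖y' a‖) (by positivity) (fun t => ‖y t‖ + ‖y' t‖)
      (hcy.norm.add hcy'.norm) (fun t => by positivity)
      (fun t ht => sol_gronwall_ineq (hq.mono_set (hsubI x hxI)) hsol ht) x ⟨hx.1, le_rfl⟩
    have := norm_nonneg (y x)
    linarith
  have hcont : ContinuousOn y' (Ico a x₀) := by
    intro x hx
    obtain ⟨w, hw1, hw2⟩ := exists_between hx.2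
    have hsol := hbefore w ⟨hx.1.trans hw1.le, hw2⟩
    have hc := continuousOn_of_primitive hsol.int_snd hsol.snd
    refine (hc x ⟨hx.1, hw1.le⟩).mono_of_mem_nhdsWithin ?_
    refine mem_nhdsWithin.mpr ⟨Iio w, isOpen_Iio, hw1, fun t ht => ⟨ht.2.1, le_of_lt ht.1⟩⟩
  have hI1 : IntegrableOn y' (Ico a x₀) :=
    IntegrableOn.of_bound (by simp) (hcont.aestronglyMeasurable measurableSet_Ico)
      (C * (‖y a‖ + ‖y' a‖)) ((ae_restrict_iff' measurableSet_Ico).mpr (Filter.Eventually.of_forall hbound))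
  have hI2 : IntegrableOn y' (Ioc x₀ c) :=
    (integrableOn_congr_fun hafter measurableSet_Ioc).mpr (by simp)
  refine hny' ((intervalIntegrable_iff_integrableOn_Icc_of_le hac).mpr ?_)
  rw [← Icc_union_Ioc_eq_Icc hax₀ hx₀c]
  exact ((integrableOn_Icc_iff_integrableOn_Ico (by simp)).2 hI1).union hI2

lemma PieceSol.conj {q : ℝ → ℝ} {lam : ℂ} {a c : ℝ} {y y' : ℝ → ℂ}
    (h : PieceSol q lam a c y y') :
    PieceSol q (conj lam) a c (fun t => conj (y t)) (fun t => conj (y' t)) := by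
  have hI : ∀ {f : ℝ → ℂ}, IntervalIntegrable f volume a c →
      IntervalIntegrable (fun t => conj (f t)) volume a c := fun hf =>
    ⟨Complex.conjCLE.toContinuousLinearMap.integrable_comp hf.1,
      Complex.conjCLE.toContinuousLinearMap.integrable_comp hf.2⟩
  have hInt : ∀ (f : ℝ → ℂ) x, conj (∫ t in a..x, f t) = ∫ t in a..x, conj (f t) := fun f x => by
    simp only [intervalIntegral, map_sub, integral_conj]
  refine ⟨hI h.int_fst, ?_, fun x hx => ?_, fun x hx => ?_⟩
  · simpa using hI h.int_snd
  · rw [h.fst x hx, map_add, hInt]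
  · rw [h.snd x hx, map_add, hInt]
    simp

/-- Lagrange identity for the Wronskian of two solutions on one piece. -/
lemma lagrange_piece {q : ℝ → ℝ} {lam mu : ℂ} {a c : ℝ} (hac : a ≤ c) {y y' v v' : ℝ → ℂ}
    (hy : PieceSol q lam a c y y') (hv : PieceSol q mu a c v v') :
    (y c * v' c - y' c * v c) - (y a * v' a - y' a * v a) =
      (lam - mu) * ∫ t in a..c, y t * v t := by
  obtain ⟨i1, e1⟩ := integral_prod_rule hac hy.int_fst hv.int_snd hy.fst hv.snd
  obtain ⟨i2, e2⟩ := integral_prod_rule hac hy.int_snd hv.int_fst hy.snd hv.fst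
  have : (y c * v' c - y' c * v c) - (y a * v' a - y' a * v a) =
      (y c * v' c - y a * v' a) - (y' c * v c - y' a * v a) := by ring
  rw [this, ← e1, ← e2, ← intervalIntegral.integral_sub i1 i2,
    ← intervalIntegral.integral_const_mul]
  congr 1
  ext t
  ring

/-- Lipschitz dependence of solutions on the initial values and on the spectral parameter, near a
fixed parameter `z`. -/
lemma sol_diff_bound {q : ℝ → ℝ} {z : ℂ} {a c : ℝ} (hac : a ≤ c)
    (hq : IntervalIntegrable q volume a c) {y₀ y₀' : ℝ → ℂ} (h₀ : PieceSol q z a c y₀ y₀') :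
    ∃ C, 0 ≤ C ∧ ∀ lam, ‖lam - z‖ ≤ 1 → ∀ y y' : ℝ → ℂ, PieceSol q lam a c y y' →
      ∀ x ∈ Icc a c, ‖y x - y₀ x‖ + ‖y' x - y₀' x‖ ≤
        C * (‖y a - y₀ a‖ + ‖y' a - y₀' a‖ + ‖lam - z‖) := by
  set k : ℝ → ℝ := fun s => 1 + |q s| + (‖z‖ + 1) with hk
  have hkI : IntervalIntegrable k volume a c :=
    ((intervalIntegrable_const (c := (1 : ℝ))).add hq.abs).add intervalIntegrable_const
  obtain ⟨G, hG, hgr⟩ := gronwall (k := k) hac hkI (fun t => by positivity)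
  have hc₀ := continuousOn_of_primitive h₀.int_fst h₀.fst
  have hc₀' := continuousOn_of_primitive h₀.int_snd h₀.snd
  obtain ⟨M, hM⟩ := isCompact_Icc.exists_bound_of_continuousOn hc₀
  have hM0 : 0 ≤ M := (norm_nonneg _).trans (hM a ⟨le_rfl, hac⟩)
  set R := 1 + M * (c - a) with hR
  have hMc : 0 ≤ M * (c - a) := mul_nonneg hM0 (by linarith)
  refine ⟨G * R, mul_nonneg hG (by linarith), fun lam hlam y y' hy x hx => ?_⟩
  have hc := continuousOn_of_primitive hy.int_fst hy.fst
  have hc' := continuousOn_of_primitive hy.int_snd hy.snd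
  set δ := ‖y a - y₀ a‖ + ‖y' a - y₀' a‖ with hδ
  have hδ0 : 0 ≤ δ := by positivity
  have hln : ‖lam‖ ≤ ‖z‖ + 1 := by
    have := norm_le_norm_add_norm_sub' lam z
    linarith
  have hineq : ∀ t ∈ Icc a c, ‖y t - y₀ t‖ + ‖y' t - y₀' t‖ ≤
      (δ + ‖lam - z‖ * (M * (c - a))) +
        ∫ s in a..t, k s * (‖y s - y₀ s‖ + ‖y' s - y₀' s‖) := by
    intro t ht
    have hsub : uIcc a t ⊆ Icc a c := by
      rw [uIcc_of_le ht.1]; exact Icc_subset_Icc_right ht.2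
    have hsub' : uIcc a t ⊆ uIcc a c := hsub.trans Icc_subset_uIcc
    have hku : IntervalIntegrable (fun s => k s * (‖y s - y₀ s‖ + ‖y' s - y₀' s‖)) volume a t :=
      (hkI.mono_set hsub').mul_continuousOn
        (((hc.sub hc₀).mono hsub).norm.add ((hc'.sub hc₀').mono hsub).norm)
    have i1 := (hy.int_fst.sub h₀.int_fst).mono_set hsub'
    have i2 := (hy.int_snd.sub h₀.int_snd).mono_set hsub'
    have e1 : ‖y t - y₀ t‖ ≤ ‖y a - y₀ a‖ + ∫ s in a..t, ‖y' s - y₀' s‖ := by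
      rw [hy.fst t ht, h₀.fst t ht, add_sub_add_comm, ← intervalIntegral.integral_sub
        (hy.int_fst.mono_set hsub') (h₀.int_fst.mono_set hsub')]
      exact (norm_add_le _ _).trans
        (add_le_add_right (intervalIntegral.norm_integral_le_integral_norm ht.1) _)
    have e2 : ‖y' t - y₀' t‖ ≤ ‖y' a - y₀' a‖ +
        ∫ s in a..t, ‖((q s : ℂ) - lam) * y s - ((q s : ℂ) - z) * y₀ s‖ := by
      rw [hy.snd t ht, h₀.snd t ht, add_sub_add_comm, ← intervalIntegral.integral_sub
        (hy.int_snd.mono_set hsub') (h₀.int_snd.mono_set hsub')]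
      exact (norm_add_le _ _).trans
        (add_le_add_right (intervalIntegral.norm_integral_le_integral_norm ht.1) _)
    have e3 : (∫ s in a..t, ‖y' s - y₀' s‖) +
        ∫ s in a..t, ‖((q s : ℂ) - lam) * y s - ((q s : ℂ) - z) * y₀ s‖ ≤
        ∫ s in a..t, (k s * (‖y s - y₀ s‖ + ‖y' s - y₀' s‖) + ‖lam - z‖ * M) := by
      rw [← intervalIntegral.integral_add i1.norm i2.norm]
      refine intervalIntegral.integral_mono_on ht.1 (i1.norm.add i2.norm)
        (hku.add intervalIntegrable_const) fun s hs => ?_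
      have n1 : ‖(q s : ℂ) - lam‖ ≤ |q s| + (‖z‖ + 1) := by
        have := norm_sub_le (q s : ℂ) lam
        rw [Complex.norm_real, Real.norm_eq_abs] at this
        linarith
      have n2 : ((q s : ℂ) - lam) * y s - ((q s : ℂ) - z) * y₀ s =
          ((q s : ℂ) - lam) * (y s - y₀ s) - (lam - z) * y₀ s := by ring
      have n3 : ‖((q s : ℂ) - lam) * y s - ((q s : ℂ) - z) * y₀ s‖ ≤
          (|q s| + (‖z‖ + 1)) * ‖y s - y₀ s‖ + ‖lam - z‖ * M := by
        rw [n2]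
        refine (norm_sub_le _ _).trans (add_le_add ?_ ?_)
        · rw [norm_mul]; gcongr
        · rw [norm_mul]; gcongr; exact hM s ⟨hs.1, hs.2.trans ht.2⟩
      have n4 : 0 ≤ (|q s| + (‖z‖ + 1)) * ‖y' s - y₀' s‖ := by positivity
      have n5 := norm_nonneg (y s - y₀ s)
      simp only [hk]
      linarith
    rw [intervalIntegral.integral_add hku intervalIntegrable_const,
      intervalIntegral.integral_const, smul_eq_mul] at e3
    have e4 : (t - a) * (‖lam - z‖ * M) ≤ ‖lam - z‖ * (M * (c - a)) := by
      have : (t - a) * (‖lam - z‖ * M) ≤ (c - a) * (‖lam - z‖ * M) := by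
        have := ht.2
        gcongr
      linarith
    linarith
  have := hgr c ⟨hac, le_rfl⟩ (δ + ‖lam - z‖ * (M * (c - a))) (by positivity)
    (fun s => ‖y s - y₀ s‖ + ‖y' s - y₀' s‖) ((hc.sub hc₀).norm.add (hc'.sub hc₀').norm)
    (fun t => by positivity) hineq x hx
  refine this.trans ?_
  rw [mul_assoc]
  refine mul_le_mul_of_nonneg_left ?_ hG
  rw [hR]
  nlinarith [norm_nonneg (lam - z), mul_nonneg hMc hδ0]

/-! ### Zeros of the characteristic function -/

/-- every zero of the entire function d(λ) = S(T,λ) (where S is the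
solution with S(0,λ)=0, S'(0,λ)=1 satisfying the discontinuity conditions) is
real and simple: d(z) = 0 implies z ∈ ℝ and (d/dλ)d(z) ≠ 0. -/
theorem zeros_of_d_real_and_simple
    (T : ℝ) (hT : 0 < T) (q : ℝ → ℝ) (hq : IntegrableOn q (Icc 0 T))
    (N : ℕ) (hN : 1 ≤ N) (b : ℕ → ℝ) (γ η : ℕ → ℝ)
    (hb0 : b 0 = 0) (hbN : b N = T)
    (hbmono : ∀ j < N, b j < b (j + 1))
    (hγ : ∀ j, 1 ≤ j → j ≤ N - 1 → 0 < γ j)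
    (S S' : ℕ → ℝ → ℂ → ℂ)
    (hS : ∀ lam : ℂ, PiecewiseSLSol q N b γ η lam
        (fun j x => S j x lam) (fun j x => S' j x lam))
    (hS0 : ∀ lam : ℂ, S 1 0 lam = 0) (hS'0 : ∀ lam : ℂ, S' 1 0 lam = 1)
    (hentire : Differentiable ℂ (fun lam => S N T lam)) :
    ∀ z : ℂ, S N T z = 0 → z.im = 0 ∧ deriv (fun lam => S N T lam) z ≠ 0 := by
  -- Each piece is a solution with genuine (non-junk) integrals.
  have hmono : ∀ m n, m ≤ n → n ≤ N → b m ≤ b n := by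
    intro m n hmn
    induction n, hmn using Nat.le_induction with
    | base => intro _; exact le_rfl
    | succ n _ ih => intro hn; exact (ih (by omega)).trans (hbmono n (by omega)).le
  have hqj : ∀ j < N, IntervalIntegrable q volume (b j) (b (j + 1)) := by
    intro j hj
    rw [intervalIntegrable_iff_integrableOn_Icc_of_le (hbmono j hj).le]
    refine hq.mono_set (Icc_subset_Icc ?_ ?_)
    · rw [← hb0]; exact hmono 0 j (by omega) (by omega)
    · rw [← hbN]; exact hmono (j + 1) N (by omega) le_rfl
  have hpiece : ∀ j < N, ∀ lam, PieceSol q lam (b j) (b (j + 1))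
      (fun x => S (j + 1) x lam) (fun x => S' (j + 1) x lam) := by
    intro j hj lam
    have h1 := (hS lam).1 (j + 1) (by omega) (by omega)
    have h2 := (hS lam).2.1 (j + 1) (by omega) (by omega)
    simp only [Nat.add_sub_cancel] at h1 h2
    exact pieceSol_of_eqns (hbmono j hj).le (hqj j hj) h1 h2
  have hjump : ∀ j, j + 1 < N → ∀ lam,
      S (j + 2) (b (j + 1)) lam = (γ (j + 1) : ℂ) * S (j + 1) (b (j + 1)) lam ∧
      S' (j + 2) (b (j + 1)) lam = ((γ (j + 1) : ℂ))⁻¹ * S' (j + 1) (b (j + 1)) lam +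
        (η (j + 1) : ℂ) * S (j + 1) (b (j + 1)) lam :=
    fun j hj lam => (hS lam).2.2 (j + 1) (by omega) (by omega)
  have hcont : ∀ j < N, ∀ lam, ContinuousOn (fun x => S (j + 1) x lam) (Icc (b j) (b (j + 1))) :=
    fun j hj lam => continuousOn_of_primitive (hpiece j hj lam).int_fst (hpiece j hj lam).fst
  -- Lagrange identity from `0` to `b (n + 1)`; the Wronskian vanishes at `0` as `S(0) = 0`.
  have hlag : ∀ lam z : ℂ, ∀ n < N,
      S (n + 1) (b (n + 1)) lam * conj (S' (n + 1) (b (n + 1)) z) -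
        S' (n + 1) (b (n + 1)) lam * conj (S (n + 1) (b (n + 1)) z) =
      (lam - conj z) * ∑ j ∈ Finset.range (n + 1),
        ∫ t in (b j)..(b (j + 1)), S (j + 1) t lam * conj (S (j + 1) t z) := by
    intro lam z n
    induction n with
    | zero =>
      intro hn
      have h := lagrange_piece (hbmono 0 hn).le (hpiece 0 hn lam) (hpiece 0 hn z).conj
      simp only [zero_add, hb0, hS0, hS'0, map_zero, map_one, zero_mul, mul_zero, sub_zero] at h
      simpa [hb0] using h
    | succ n ih =>
      intro hn
      have h := lagrange_piece (hbmono (n + 1) hn).le (hpiece (n + 1) hn lam)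
        (hpiece (n + 1) hn z).conj
      have ih := ih (by omega)
      obtain ⟨j1, j2⟩ := hjump n hn lam
      obtain ⟨j3, j4⟩ := hjump n hn z
      have hγ0 : (γ (n + 1) : ℂ) ≠ 0 := by
        exact_mod_cast ne_of_gt (hγ (n + 1) (by omega) (by omega))
      -- The jump matrix has determinant one, so the Wronskian is continuous across the jump.
      have hW : S (n + 2) (b (n + 1)) lam * conj (S' (n + 2) (b (n + 1)) z) -
          S' (n + 2) (b (n + 1)) lam * conj (S (n + 2) (b (n + 1)) z) =
          S (n + 1) (b (n + 1)) lam * conj (S' (n + 1) (b (n + 1)) z) -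
          S' (n + 1) (b (n + 1)) lam * conj (S (n + 1) (b (n + 1)) z) := by
        rw [j1, j2, j3, j4]
        simp only [map_mul, map_add, map_inv₀, Complex.conj_ofReal]
        field_simp
        ring
      rw [Finset.sum_range_succ, mul_add, ← ih, ← hW, ← h]
      ring
  have hN1 : N - 1 + 1 = N := by omega
  have hlagN : ∀ lam z : ℂ, S N T z = 0 → S N T lam * conj (S' N T z) =
      (lam - conj z) * ∑ j ∈ Finset.range N,
        ∫ t in (b j)..(b (j + 1)), S (j + 1) t lam * conj (S (j + 1) t z) := by
    intro lam z hz
    have h := hlag lam z (N - 1) (by omega)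
    rw [hN1, hbN, hz, map_zero, mul_zero, sub_zero] at h
    exact h
  have hpos : ∀ z : ℂ, ∑ j ∈ Finset.range N,
      ∫ t in (b j)..(b (j + 1)), S (j + 1) t z * conj (S (j + 1) t z) ≠ 0 := by
    intro z
    have hcast : ∑ j ∈ Finset.range N,
        ∫ t in (b j)..(b (j + 1)), S (j + 1) t z * conj (S (j + 1) t z) =
        ((∑ j ∈ Finset.range N,
          ∫ t in (b j)..(b (j + 1)), Complex.normSq (S (j + 1) t z) : ℝ) : ℂ) := by
      simp only [Complex.mul_conj, Complex.ofReal_sum, intervalIntegral.integral_ofReal]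
    rw [hcast]
    refine Complex.ofReal_ne_zero.mpr (ne_of_gt ?_)
    refine Finset.sum_pos' (fun j hj => intervalIntegral.integral_nonneg
      (hbmono j (Finset.mem_range.mp hj)).le fun t _ => Complex.normSq_nonneg _)
      ⟨0, Finset.mem_range.mpr (by omega), ?_⟩
    have hsol := hpiece 0 (by omega) z
    have h01 := hbmono 0 (by omega)
    have hc := hcont 0 (by omega) z
    simp only [zero_add] at hsol h01 hc ⊢
    have hcn : ContinuousOn (fun t => Complex.normSq (S 1 t z)) (Icc (b 0) (b 1)) :=
      Complex.continuous_normSq.comp_continuousOn hc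
    refine intervalIntegral.integral_pos h01 hcn (fun t _ => Complex.normSq_nonneg _) ?_
    by_contra hno
    push Not at hno
    -- If `S` vanished on the first piece, then `S'` would be `1` there, so `S(b₁) = b₁ ≠ 0`.
    have hzero : ∀ t ∈ Icc (b 0) (b 1), S 1 t z = 0 := fun t ht =>
      Complex.normSq_eq_zero.mp (le_antisymm (hno t ht) (Complex.normSq_nonneg _))
    have hone : ∀ t ∈ Icc (b 0) (b 1), S' 1 t z = 1 := by
      intro t ht
      have h := hsol.snd t ht
      rw [h, intervalIntegral.integral_zero_ae (Filter.Eventually.of_forall fun s hs => by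
        rw [uIoc_of_le ht.1] at hs
        rw [hzero s ⟨hs.1.le, hs.2.trans ht.2⟩, mul_zero])]
      simp [hb0, hS'0]
    have h := hsol.fst (b 1) ⟨h01.le, le_rfl⟩
    rw [intervalIntegral.integral_congr (g := fun _ => (1 : ℂ)) (fun t ht => by
      rw [uIcc_of_le h01.le] at ht; exact hone t ht), hzero _ ⟨h01.le, le_rfl⟩,
      hzero _ ⟨le_rfl, h01.le⟩, intervalIntegral.integral_const] at h
    simp only [zero_add, Complex.real_smul, mul_one] at h
    have : b 1 - b 0 = 0 := by exact_mod_cast h.symm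
    linarith
  intro z hz
  have him : z.im = 0 := by
    have h := hlagN z z hz
    rw [hz, zero_mul] at h
    have := (mul_eq_zero.mp h.symm).resolve_right (hpos z)
    exact Complex.conj_eq_iff_im.mp (sub_eq_zero.mp this).symm
  refine ⟨him, fun hd => ?_⟩
  have hzc : conj z = z := Complex.conj_eq_iff_im.mpr him
  have hdiff : ∀ j < N, ∃ C, ∀ lam, ‖lam - z‖ ≤ 1 → ∀ x ∈ Icc (b j) (b (j + 1)),
      ‖S (j + 1) x lam - S (j + 1) x z‖ + ‖S' (j + 1) x lam - S' (j + 1) x z‖ ≤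
        C * ‖lam - z‖ := by
    intro j
    induction j with
    | zero =>
      intro hj
      obtain ⟨C, _, h⟩ := sol_diff_bound (hbmono 0 hj).le (hqj 0 hj) (hpiece 0 hj z)
      refine ⟨C, fun lam hlam x hx => ?_⟩
      simpa [hb0, hS0, hS'0] using h lam hlam _ _ (hpiece 0 hj lam) x hx
    | succ j ih =>
      intro hj
      obtain ⟨C₁, h₁⟩ := ih (by omega)
      obtain ⟨C, hC, h⟩ := sol_diff_bound (hbmono (j + 1) hj).le (hqj (j + 1) hj)
        (hpiece (j + 1) hj z)
      set g := |γ (j + 1)| + |γ (j + 1)|⁻¹ + |η (j + 1)| with hg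
      refine ⟨C * (g * C₁ + 1), fun lam hlam x hx => ?_⟩
      refine (h lam hlam _ _ (hpiece (j + 1) hj lam) x hx).trans ?_
      rw [mul_assoc]
      refine mul_le_mul_of_nonneg_left ?_ hC
      have hprev := h₁ lam hlam (b (j + 1)) ⟨(hbmono j (by omega)).le, le_rfl⟩
      obtain ⟨j1, j2⟩ := hjump j hj lam
      obtain ⟨j3, j4⟩ := hjump j hj z
      set u := S (j + 1) (b (j + 1)) lam - S (j + 1) (b (j + 1)) z with hu
      set u' := S' (j + 1) (b (j + 1)) lam - S' (j + 1) (b (j + 1)) z with hu'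
      have k1 : S (j + 1 + 1) (b (j + 1)) lam - S (j + 1 + 1) (b (j + 1)) z =
          (γ (j + 1) : ℂ) * u := by
        rw [j1, j3, hu]; ring
      have k2 : S' (j + 1 + 1) (b (j + 1)) lam - S' (j + 1 + 1) (b (j + 1)) z =
          ((γ (j + 1) : ℂ))⁻¹ * u' + (η (j + 1) : ℂ) * u := by
        rw [j2, j4, hu, hu']; ring
      have k3 : ‖(γ (j + 1) : ℂ) * u‖ = |γ (j + 1)| * ‖u‖ := by simp
      have k4 : ‖((γ (j + 1) : ℂ))⁻¹ * u' + (η (j + 1) : ℂ) * u‖ ≤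
          |γ (j + 1)|⁻¹ * ‖u'‖ + |η (j + 1)| * ‖u‖ := by
        refine (norm_add_le _ _).trans (le_of_eq ?_)
        simp
      rw [k1, k2, k3]
      have k5 : g * (‖u‖ + ‖u'‖) ≤ g * (C₁ * ‖lam - z‖) :=
        mul_le_mul_of_nonneg_left hprev (by positivity)
      have k6 : 0 ≤ |γ (j + 1)|⁻¹ * ‖u‖ := by positivity
      have k7 : 0 ≤ (|γ (j + 1)| + |η (j + 1)|) * ‖u'‖ := by positivity
      rw [hg] at k5 ⊢
      linarith
  have hlim : Filter.Tendsto (fun lam => ∑ j ∈ Finset.range N,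
      ∫ t in (b j)..(b (j + 1)), S (j + 1) t lam * conj (S (j + 1) t z)) (nhds z)
      (nhds (∑ j ∈ Finset.range N,
        ∫ t in (b j)..(b (j + 1)), S (j + 1) t z * conj (S (j + 1) t z))) := by
    refine tendsto_finsetSum _ fun j hj => ?_
    have hj := Finset.mem_range.mp hj
    obtain ⟨C, hC⟩ := hdiff j hj
    obtain ⟨M, hM⟩ := isCompact_Icc.exists_bound_of_continuousOn (hcont j hj z)
    have hI : ∀ lam, IntervalIntegrable (fun t => S (j + 1) t lam * conj (S (j + 1) t z))
        volume (b j) (b (j + 1)) := fun lam => by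
      refine ContinuousOn.intervalIntegrable ?_
      rw [uIcc_of_le (hbmono j hj).le]
      exact (hcont j hj lam).mul (Complex.continuous_conj.comp_continuousOn (hcont j hj z))
    rw [tendsto_iff_norm_sub_tendsto_zero]
    refine squeeze_zero' (Filter.Eventually.of_forall fun _ => norm_nonneg _)
      (g := fun lam => C * ‖lam - z‖ * M * |b (j + 1) - b j|) ?_ ?_
    · filter_upwards [Metric.closedBall_mem_nhds z one_pos] with lam hlam
      rw [mem_closedBall_iff_norm] at hlam
      rw [← intervalIntegral.integral_sub (hI lam) (hI z)]
      refine intervalIntegral.norm_integral_le_of_norm_le_const fun t ht => ?_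
      rw [uIoc_of_le (hbmono j hj).le] at ht
      have ht' : t ∈ Icc (b j) (b (j + 1)) := ⟨ht.1.le, ht.2⟩
      have h1 := hC lam hlam t ht'
      have h2 := norm_nonneg (S' (j + 1) t lam - S' (j + 1) t z)
      rw [← sub_mul, norm_mul, Complex.norm_conj]
      exact mul_le_mul (by linarith) (hM t ht') (norm_nonneg _)
        ((add_nonneg (norm_nonneg _) h2).trans h1)
    · have : Continuous fun lam : ℂ => C * ‖lam - z‖ * M * |b (j + 1) - b j| := by fun_prop
      simpa using this.tendsto z
  have hder : HasDerivAt (fun lam => S N T lam) 0 z := hd ▸ (hentire z).hasDerivAt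
  have hslope := (hasDerivAt_iff_tendsto_slope.mp hder).mul_const (conj (S' N T z))
  have heq : (fun lam => slope (fun lam => S N T lam) z lam * conj (S' N T z))
      =ᶠ[nhdsWithin z {z}ᶜ] fun lam => ∑ j ∈ Finset.range N,
        ∫ t in (b j)..(b (j + 1)), S (j + 1) t lam * conj (S (j + 1) t z) := by
    filter_upwards [self_mem_nhdsWithin] with lam hlam
    have hne : lam - z ≠ 0 := sub_ne_zero.mpr hlam
    have h := hlagN lam z hz
    rw [hzc] at h
    rw [slope_def_field, hz, sub_zero, div_mul_eq_mul_div, h, mul_div_cancel_left₀ _ hne]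
  have hlim' := (hlim.mono_left nhdsWithin_le_nhds).congr' heq.symm
  have := tendsto_nhds_unique hlim' hslope
  rw [zero_mul] at this
  exact hpos z this
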